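/- arXiv:2310.19486 — 2 statements merged into one kernel-verified Lean document; each statement's English description precedes it below -/
import Mathlib

section
/- In the braid group B_n, for every k with 2 ≤ k ≤ n, the element U_k commutes with each of D_i, E_i and U_i for all 2 ≤ i ≤ k−1. -/
/-- The braid relations on `m` generators (so that `σ_1, …, σ_m` present the braid
group `B_{m+1}`); generator `i : Fin m` corresponds to `σ_{i+1}`. -/
def braidRels (m : ℕ) : Set (FreeGroup (Fin m)) :=
  {r | ∃ i j : Fin m, (i.val + 2 ≤ j.val ∨ j.val + 2 ≤ i.val) ∧
        r = FreeGroup.of i * FreeGroup.of j * (FreeGroup.of i)⁻¹ * (FreeGroup.of j)⁻¹}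
  ∪ {r | ∃ i j : Fin m, (i.val + 1 = j.val ∨ j.val + 1 = i.val) ∧
        r = FreeGroup.of i * FreeGroup.of j * FreeGroup.of i *
            (FreeGroup.of j * FreeGroup.of i * FreeGroup.of j)⁻¹}

/-- The braid group `B n` on `n` strands, presented with generators `σ_1, …, σ_{n-1}`. -/
abbrev BraidGroup (n : ℕ) : Type := PresentedGroup (braidRels (n - 1))

namespace BraidGroup

/-- The Artin generator `σ_i` of `B n` for `1 ≤ i ≤ n - 1` (junk value `1` otherwise). -/
def σ (n i : ℕ) : BraidGroup n :=
  if h : 1 ≤ i ∧ i ≤ n - 1 then PresentedGroup.of (⟨i - 1, by omega⟩ : Fin (n - 1)) else 1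

/-- `D n k = σ_{k-1} ⋯ σ_2 σ_1` in `B n`; `D n 1 = 1`. -/
def D (n k : ℕ) : BraidGroup n :=
  (((List.range (k - 1)).reverse).map (fun j => σ n (j + 1))).prod

/-- `E n k = σ_1 σ_2 ⋯ σ_{k-1}` in `B n`; `E n 1 = 1`. -/
def E (n k : ℕ) : BraidGroup n :=
  ((List.range (k - 1)).map (fun j => σ n (j + 1))).prod

/-- `U n k = D n k * E n k` in `B n`; `U n 1 = 1`. -/
def U (n k : ℕ) : BraidGroup n := D n k * E n k

/-- `δ = σ_{n-1} σ_{n-2} ⋯ σ_1` in `B n`. -/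
def delta (n : ℕ) : BraidGroup n := D n n

/-- `Δ = σ_1 (σ_2 σ_1) ⋯ (σ_{n-1} ⋯ σ_1) = D_2 D_3 ⋯ D_n` in `B n`. -/
def Delta (n : ℕ) : BraidGroup n :=
  ((List.range (n - 1)).map (fun j => D n (j + 2))).prod

end BraidGroup

namespace BraidGroup

theorem σ_commute {n i j : ℕ} (hij : i + 2 ≤ j) : Commute (σ n i) (σ n j) := by
  unfold σ
  split_ifs with hi hj
  · rw [commute_iff_eq, ← mul_inv_eq_one, mul_inv_rev, ← mul_assoc]
    exact PresentedGroup.one_of_mem (rels := braidRels (n - 1))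
      (Or.inl ⟨⟨i - 1, by omega⟩, ⟨j - 1, by omega⟩, Or.inl (by simp only; omega), rfl⟩)
  · exact Commute.one_right _
  · exact Commute.one_left _
  · exact Commute.one_left _

theorem σ_braid {n j : ℕ} (hj : 1 ≤ j) (hjn : j + 2 ≤ n) :
    σ n j * σ n (j + 1) * σ n j = σ n (j + 1) * σ n j * σ n (j + 1) := by
  unfold σ
  rw [dif_pos ⟨hj, by omega⟩, dif_pos ⟨by omega, by omega⟩, ← mul_inv_eq_one]
  exact PresentedGroup.one_of_mem (rels := braidRels (n - 1))
    (Or.inr ⟨⟨j - 1, by omega⟩, ⟨j + 1 - 1, by omega⟩, Or.inl (by simp only; omega), rfl⟩)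

theorem D_succ (n : ℕ) {k : ℕ} (hk : 1 ≤ k) : D n (k + 1) = σ n k * D n k := by
  obtain ⟨k, rfl⟩ := Nat.exists_eq_add_of_le' hk
  simp [D, List.range_succ]

theorem E_succ (n : ℕ) {k : ℕ} (hk : 1 ≤ k) : E n (k + 1) = E n k * σ n k := by
  obtain ⟨k, rfl⟩ := Nat.exists_eq_add_of_le' hk
  simp [E, List.range_succ]

theorem commute_D {n k : ℕ} {x : BraidGroup n}
    (h : ∀ j, 1 ≤ j → j + 1 ≤ k → Commute x (σ n j)) : Commute x (D n k) := by
  refine Commute.list_prod_right _ _ fun y hy => ?_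
  simp only [List.mem_map, List.mem_reverse, List.mem_range] at hy
  obtain ⟨j, hj, rfl⟩ := hy
  exact h _ (by omega) (by omega)

theorem commute_E {n k : ℕ} {x : BraidGroup n}
    (h : ∀ j, 1 ≤ j → j + 1 ≤ k → Commute x (σ n j)) : Commute x (E n k) := by
  refine Commute.list_prod_right _ _ fun y hy => ?_
  simp only [List.mem_map, List.mem_range] at hy
  obtain ⟨j, hj, rfl⟩ := hy
  exact h _ (by omega) (by omega)

theorem E_semiconj {n j k : ℕ} (hj : 1 ≤ j) (hjk : j + 2 ≤ k) (hkn : k ≤ n) :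
    SemiconjBy (E n k) (σ n j) (σ n (j + 1)) := by
  induction k, hjk using Nat.le_induction with
  | base =>
    rw [E_succ n (by omega : 1 ≤ j + 1), E_succ n hj, mul_assoc]
    refine SemiconjBy.mul_left (y := σ n (j + 1)) ?_ ?_
    · exact (commute_E fun i _ hi => (σ_commute (by omega)).symm).symm
    · rw [SemiconjBy, σ_braid hj hkn, mul_assoc]
  | succ k hk ih =>
    rw [E_succ n (by omega)]
    exact (ih (by omega)).mul_left (σ_commute hk).symm

theorem D_semiconj {n j k : ℕ} (hj : 1 ≤ j) (hjk : j + 2 ≤ k) (hkn : k ≤ n) :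
    SemiconjBy (D n k) (σ n (j + 1)) (σ n j) := by
  induction k, hjk using Nat.le_induction with
  | base =>
    rw [D_succ n (by omega : 1 ≤ j + 1), D_succ n hj, ← mul_assoc]
    refine SemiconjBy.mul_left (y := σ n (j + 1)) ?_ ?_
    · rw [SemiconjBy, ← σ_braid hj hkn, mul_assoc]
    · exact (commute_D fun i _ hi => (σ_commute (by omega)).symm).symm
  | succ k hk ih =>
    rw [D_succ n (by omega)]
    exact SemiconjBy.mul_left (σ_commute hk).symm (ih (by omega))

theorem U_commute_σ {n j k : ℕ} (hj : 1 ≤ j) (hjk : j + 2 ≤ k) (hkn : k ≤ n) :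
    Commute (U n k) (σ n j) :=
  (D_semiconj hj hjk hkn).mul_left (E_semiconj hj hjk hkn)

end BraidGroup

/-- **Lemma (DEU (iii)).** In `B n`, for `2 ≤ k ≤ n`, the element `U_k` commutes with
each of `D_i`, `E_i` and `U_i` for all `2 ≤ i ≤ k - 1`. -/
theorem U_DEU_comm (n k : ℕ) (hk2 : 2 ≤ k) (hkn : k ≤ n)
    (i : ℕ) (hi2 : 2 ≤ i) (hi : i ≤ k - 1) :
    BraidGroup.U n k * BraidGroup.D n i = BraidGroup.D n i * BraidGroup.U n k ∧
    BraidGroup.U n k * BraidGroup.E n i = BraidGroup.E n i * BraidGroup.U n k ∧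
    BraidGroup.U n k * BraidGroup.U n i = BraidGroup.U n i * BraidGroup.U n k := by
  have hσ : ∀ j, 1 ≤ j → j + 1 ≤ i → Commute (BraidGroup.U n k) (BraidGroup.σ n j) :=
    fun j hj hji => BraidGroup.U_commute_σ hj (by omega) hkn
  have hD := BraidGroup.commute_D hσ
  have hE := BraidGroup.commute_E hσ
  exact ⟨hD, hE, hD.mul_right hE⟩
end

section
/- In the braid group B_n, for every q ≥ 1 and all integers 2 ≤ a_1 < a_2 < ⋯ < a_q ≤ n, one has U_{a_1}·U_{a_2}·⋯·U_{a_q} = (D_{a_1}·D_{a_2}·⋯·D_{a_q})·(E_{a_q}·⋯·E_{a_2}·E_{a_1}). -/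
namespace BraidGroup

theorem commute_σ (n : ℕ) {i j : ℕ} (h : i + 2 ≤ j) : Commute (σ n i) (σ n j) := by
  unfold σ
  split_ifs with hi hj
  · have hrel : FreeGroup.of (⟨i - 1, by omega⟩ : Fin (n - 1)) *
        FreeGroup.of (⟨j - 1, by omega⟩ : Fin (n - 1)) *
        (FreeGroup.of (⟨i - 1, by omega⟩ : Fin (n - 1)))⁻¹ *
        (FreeGroup.of (⟨j - 1, by omega⟩ : Fin (n - 1)))⁻¹ ∈ braidRels (n - 1) :=
      Or.inl ⟨_, _, Or.inl (by simp only; omega), rfl⟩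
    have := PresentedGroup.one_of_mem hrel
    simp only [map_mul, map_inv] at this
    exact mul_inv_eq_iff_eq_mul.mp (mul_inv_eq_one.mp this)
  all_goals first | exact Commute.one_left _ | exact Commute.one_right _

theorem σ_braid_s5 {n i : ℕ} (h1 : 1 ≤ i) (hn : i + 1 ≤ n - 1) :
    σ n i * σ n (i + 1) * σ n i = σ n (i + 1) * σ n i * σ n (i + 1) := by
  have hi : 1 ≤ i ∧ i ≤ n - 1 := by omega
  have hj : 1 ≤ i + 1 ∧ i + 1 ≤ n - 1 := by omega
  unfold σ
  rw [dif_pos hi, dif_pos hj]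
  have hrel : FreeGroup.of (⟨i - 1, by omega⟩ : Fin (n - 1)) *
      FreeGroup.of (⟨i + 1 - 1, by omega⟩ : Fin (n - 1)) *
      FreeGroup.of (⟨i - 1, by omega⟩ : Fin (n - 1)) *
      (FreeGroup.of (⟨i + 1 - 1, by omega⟩ : Fin (n - 1)) *
        FreeGroup.of (⟨i - 1, by omega⟩ : Fin (n - 1)) *
        FreeGroup.of (⟨i + 1 - 1, by omega⟩ : Fin (n - 1)))⁻¹ ∈ braidRels (n - 1) :=
    Or.inr ⟨_, _, Or.inl (by simp only; omega), rfl⟩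
  have := PresentedGroup.one_of_mem hrel
  simp only [map_mul, map_inv] at this
  exact mul_inv_eq_one.mp this

theorem U_one (n : ℕ) : U n 1 = 1 := by simp [U, D, E]

theorem U_add_two (n m : ℕ) : U n (m + 2) = σ n (m + 1) * U n (m + 1) * σ n (m + 1) := by
  simp [U, D, E, List.range_succ, mul_assoc]

theorem commute_U_σ_of_lt (n m : ℕ) {j : ℕ} (h : m + 1 < j) :
    Commute (U n (m + 1)) (σ n j) := by
  induction m with
  | zero => simp [U_one]
  | succ m ih =>
    rw [U_add_two]
    have hσ : Commute (σ n (m + 1)) (σ n j) := commute_σ n (by omega)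
    exact (hσ.mul_left (ih (by omega))).mul_left hσ

/-- `U_{m+1}` commutes with `σ_1, …, σ_{m-1}`. -/
theorem commute_σ_U {n m i : ℕ} (hm : m ≤ n - 1) (h1 : 1 ≤ i) (hi : i < m) :
    Commute (σ n i) (U n (m + 1)) := by
  induction m with
  | zero => omega
  | succ m ih =>
    rcases Nat.lt_succ_iff_lt_or_eq.mp hi with h | rfl
    · have hσ : Commute (σ n i) (σ n (m + 1)) := commute_σ n (by omega)
      rw [U_add_two]
      exact (hσ.mul_right (ih (by omega) h)).mul_right hσ
    · obtain ⟨l, rfl⟩ : ∃ l, i = l + 1 := ⟨i - 1, by omega⟩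
      have hb := σ_braid_s5 h1 hm
      have hc := (commute_U_σ_of_lt n l (j := l + 1 + 1) (by omega)).eq
      rw [U_add_two, U_add_two]
      set x := σ n (l + 1)
      set y := σ n (l + 1 + 1)
      set u := U n (l + 1)
      calc x * (y * (x * u * x) * y) = (x * y * x) * u * x * y := by group
        _ = y * x * (y * u) * x * y := by rw [hb]; group
        _ = y * x * u * (y * x * y) := by rw [← hc]; group
        _ = y * (x * u * x) * y * x := by rw [← hb]; group

theorem commute_E_U {n j k : ℕ} (hjk : j < k) (hk : k ≤ n) : Commute (E n j) (U n k) := by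
  obtain ⟨m, rfl⟩ : ∃ m, k = m + 1 := ⟨k - 1, by omega⟩
  refine Commute.list_prod_left _ _ fun x hx => ?_
  obtain ⟨i, hi, rfl⟩ := List.mem_map.mp hx
  rw [List.mem_range] at hi
  exact commute_σ_U (by omega) (by omega) (by omega)

end BraidGroup

/-- **Lemma (DEU (iv)).** In `B n`, for `q ≥ 1` and `2 ≤ a_1 < a_2 < ⋯ < a_q ≤ n`,
`U_{a_1} U_{a_2} ⋯ U_{a_q} = (D_{a_1} D_{a_2} ⋯ D_{a_q}) · (E_{a_q} ⋯ E_{a_2} E_{a_1})`. -/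
theorem U_prod_eq_D_prod_E_prod (n q : ℕ) (hq : 1 ≤ q) (a : ℕ → ℕ)
    (ha2 : 2 ≤ a 1) (hmono : ∀ i, 1 ≤ i → i < q → a i < a (i + 1)) (han : a q ≤ n) :
    ((List.range q).map (fun j => BraidGroup.U n (a (j + 1)))).prod =
      ((List.range q).map (fun j => BraidGroup.D n (a (j + 1)))).prod *
        (((List.range q).reverse).map (fun j => BraidGroup.E n (a (j + 1)))).prod := by
  induction q, hq using Nat.le_induction with
  | base => simp [BraidGroup.U]
  | succ q hq ih =>
    have hlt : ∀ i, 1 ≤ i → i ≤ q → a i < a (q + 1) := fun i h1 hi => by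
      obtain ⟨d, rfl⟩ := Nat.exists_eq_add_of_le hi
      clear ih hq han
      induction d with
      | zero => exact hmono i h1 (by omega)
      | succ d ihd =>
        exact (ihd (fun k h1 hk => hmono k h1 (by omega)) (by omega)).trans
          (hmono _ (by omega) (by omega))
    have hcomm : Commute (((List.range q).reverse).map fun j => BraidGroup.E n (a (j + 1))).prod
        (BraidGroup.U n (a (q + 1))) := by
      refine Commute.list_prod_left _ _ fun x hx => ?_
      obtain ⟨i, hi, rfl⟩ := List.mem_map.mp hx
      rw [List.mem_reverse, List.mem_range] at hi
      exact BraidGroup.commute_E_U (hlt _ (by omega) (by omega)) han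
    have ih' := ih (fun i h1 hi => hmono i h1 (by omega)) ((hlt q hq le_rfl).le.trans han)
    simp only [List.range_succ, List.map_append, List.prod_append, List.map_singleton,
      List.prod_singleton, List.reverse_append, List.reverse_singleton]
    rw [ih', mul_assoc, hcomm.eq, BraidGroup.U]
    group
end
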